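/- Let K be a field and let A be a right anticommutative algebra over K. Then A satisfies the di-Malcev identity ((ab)c)d − ((ad)b)c − (a(cd))b − (ac)(bd) − a((bc)d) = 0 for all a,b,c,d if and only if A satisfies the identity (bd)(ca) + ((ba)c)d − ((bc)d)a + b(a(dc)) − (b(ad))c = 0 for all a,b,c,d. -/

import Mathlib

/-!
In a right anticommutative algebra the left-hand side of the second identity at `(a, b, c, d)` is
the negative of the left-hand side of the di-Malcev identity at the cyclic shift `(b, c, d, a)`:
the terms agree up to sign once the products `b(ad)` and `b(a(dc))` are reversed. Hence one
expression vanishes identically exactly when the other does.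
-/

section RightAnticommutative

variable {R A : Type*} [CommSemiring R] [AddCommGroup A] [Module R A]

/-- Right anticommutativity of the algebra whose product `ab` is `f a b`; right factors that are
products may then be reversed at the cost of a sign. -/
def IsRightAnticommutative (f : A →ₗ[R] A →ₗ[R] A) : Prop :=
  ∀ a b c : A, f a (f b c) + f a (f c b) = 0

/-- The left-hand side of the di-Malcev identity for the product `f`, as an element of the algebra;
the identity holds when this element is always zero. -/
def diMalcevDefect (f : A →ₗ[R] A →ₗ[R] A) (a b c d : A) : A :=
  f (f (f a b) c) d - f (f (f a d) b) c - f (f a (f c d)) b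
    - f (f a c) (f b d) - f a (f (f b c) d)

/-- The left-hand side of `(bd)(ca) + ((ba)c)d − ((bc)d)a + b(a(dc)) − (b(ad))c = 0` for the
product `f`, as an element of the algebra, so that it can be compared with `diMalcevDefect`. -/
def identity22Defect (f : A →ₗ[R] A →ₗ[R] A) (a b c d : A) : A :=
  f (f b d) (f c a) + f (f (f b a) c) d - f (f (f b c) d) a
    + f b (f a (f d c)) - f (f b (f a d)) c

namespace IsRightAnticommutative

variable {f : A →ₗ[R] A →ₗ[R] A}

theorem mul_mul_swap (hf : IsRightAnticommutative f) (a b c : A) :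
    f a (f b c) = -f a (f c b) :=
  eq_neg_of_add_eq_zero_left (hf a b c)

theorem mul_mul_mul_reverse (hf : IsRightAnticommutative f) (a b c d : A) :
    f a (f b (f c d)) = f a (f (f d c) b) :=
  calc
    f a (f b (f c d)) = -f a (f b (f d c)) := by rw [hf.mul_mul_swap b c d, map_neg]
    _ = f a (f (f d c) b) := by rw [hf.mul_mul_swap a b (f d c), neg_neg]

theorem identity22Defect_eq_neg_diMalcevDefect (hf : IsRightAnticommutative f) (a b c d : A) :
    identity22Defect f a b c d = -diMalcevDefect f b c d a := by
  have swap_in_left_factor : f (f b (f a d)) c = -f (f b (f d a)) c := by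
    rw [hf.mul_mul_swap b a d, map_neg, LinearMap.neg_apply]
  rw [identity22Defect, diMalcevDefect, swap_in_left_factor, hf.mul_mul_mul_reverse b a d c]
  abel

end IsRightAnticommutative

theorem di_malcev_iff_identity22_general {f : A →ₗ[R] A →ₗ[R] A}
    (hf : IsRightAnticommutative f) :
    (∀ a b c d : A, diMalcevDefect f a b c d = 0) ↔
      ∀ a b c d : A, identity22Defect f a b c d = 0 := by
  simp only [hf.identity22Defect_eq_neg_diMalcevDefect, neg_eq_zero]
  exact ⟨fun h a b c d => h b c d a, fun h a b c d => h d a b c⟩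

end RightAnticommutative

/-- A right anticommutative algebra `A` over a field `K`
satisfies the di-Malcev identity
`((ab)c)d − ((ad)b)c − (a(cd))b − (ac)(bd) − a((bc)d) = 0`
if and only if it satisfies the identity
`(bd)(ca) + ((ba)c)d − ((bc)d)a + b(a(dc)) − (b(ad))c = 0`. -/
theorem di_malcev_iff_identity22 (K : Type) [Field K]
    (A : Type) [AddCommGroup A] [Module K A]
    (f : A →ₗ[K] A →ₗ[K] A)
    (hra : ∀ a b c : A, f a (f b c) + f a (f c b) = 0) :
    (∀ a b c d : A,
      f (f (f a b) c) d - f (f (f a d) b) c - f (f a (f c d)) b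
        - f (f a c) (f b d) - f a (f (f b c) d) = 0) ↔
    (∀ a b c d : A,
      f (f b d) (f c a) + f (f (f b a) c) d - f (f (f b c) d) a
        + f b (f a (f d c)) - f (f b (f a d)) c = 0) :=
  di_malcev_iff_identity22_general hra
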